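/- Let m ≥ 1 and c ≥ 1 be fixed integers. There exists s0 = s0(m,c) such that for all integers s ≥ s0, setting n = ms + c and ℓ = s − c, the maximum size of a family F ⊆ 2^{[n]} with ν(F) < s equals |Q(m,s,ℓ)|; that is, every family F of subsets of [n] containing no s pairwise disjoint sets satisfies |F| ≤ |Q(m,s,ℓ)|, and the family Q(m,s,ℓ) itself contains no s pairwise disjoint sets. -/

import Mathlib

open Finset

/-- The ground set `[n] = {1, …, n}`. -/
def ground (n : ℕ) : Finset ℕ := Finset.Icc 1 n

/-- `F` contains a matching of size `s`: `s` pairwise disjoint member sets. -/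
def HasMatching (F : Finset (Finset ℕ)) (s : ℕ) : Prop :=
  ∃ M ⊆ F, M.card = s ∧ (M : Set (Finset ℕ)).PairwiseDisjoint id

/-- `A = (a₁ < … < a_k)` can be shifted to `B = (b₁ < … < b_k)`: same size and `bᵢ ≤ aᵢ`. -/
def CanShiftTo (A B : Finset ℕ) : Prop :=
  ∃ h : B.card = A.card, ∀ i : Fin A.card,
    B.orderEmbOfFin h i ≤ A.orderEmbOfFin (rfl : A.card = A.card) i

/-- A family of subsets of the positive integers is shifted. -/
def IsShifted (F : Finset (Finset ℕ)) : Prop :=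
  ∀ A ∈ F, ∀ B : Finset ℕ, 0 ∉ B → CanShiftTo A B → B ∈ F

/-- `Q(m,s,ℓ) = {P ⊆ [ms+c] : |P| + |P ∩ [ms−c−1]| ≥ 2m}` where `ℓ = s − c`. -/
def Qfam (m s c : ℕ) : Finset (Finset ℕ) :=
  (ground (m * s + c)).powerset.filter
    (fun P => 2 * m ≤ P.card + (P ∩ ground (m * s - c - 1)).card)

/-- `W(m,s,ℓ) = {P ⊆ [ms+c] : |P ∩ [ms−1]| ≥ m}`. -/
def Wfam (m s c : ℕ) : Finset (Finset ℕ) :=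
  (ground (m * s + c)).powerset.filter
    (fun P => m ≤ (P ∩ ground (m * s - 1)).card)

/-- `P(m,s,ℓ) = {P ⊆ [ms+c] : |P| + |P ∩ [ℓ−1]| ≥ m+1}` where `ℓ = s − c`. -/
def Pfam (m s c : ℕ) : Finset (Finset ℕ) :=
  (ground (m * s + c)).powerset.filter
    (fun P => m + 1 ≤ P.card + (P ∩ ground (s - c - 1)).card)

/-- `P'(m,s,ℓ) = ⋃_{i=m+1}^n ([n] choose i) ∪ ([mℓ−1] choose m)` where `ℓ = s − c`. -/
def P'fam (m s c : ℕ) : Finset (Finset ℕ) :=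
  (ground (m * s + c)).powerset.filter
    (fun P => m + 1 ≤ P.card ∨ (P.card = m ∧ P ⊆ ground (m * (s - c) - 1)))

/-- The deletion number `d(F)`: the least size of a set `X ⊆ [n]` whose removal kills
all `ℓ`-matchings in the `m`-th layer of `F`. -/
noncomputable def delNum (n m ℓ : ℕ) (F : Finset (Finset ℕ)) : ℕ :=
  sInf {d : ℕ | ∃ X ⊆ ground n, X.card = d ∧
    ¬ HasMatching (F.filter (fun A => A.card = m ∧ A ⊆ ground n \ X)) ℓ}

/-- `y_F(i)`: the number of `i`-element subsets of `[n]` not in `F`. -/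
def yF (n : ℕ) (F : Finset (Finset ℕ)) (i : ℕ) : ℕ :=
  (((ground n).powerset.filter (fun A => A.card = i)) \ F).card


/-!
`Q` has no `s`-matching by weighing: give weight `2` to the elements of `[ms - c - 1]` and weight `1` to
the other `2c + 1` elements of `[n]`. Every set of `Q` has weight at least `2m`, and `[n]` has weight
`2ms - 1` (`Qfam_noMatching`).

For the upper bound take an extremal `F` closed under supersets and shifted (`exists_shifted`), and
suppose that it misses fewer sets of `[n]` than `Q` does. The number of sets missing from `Q` is about
`(2c + 2) (n choose m - 1)` (`card_Qmiss_le`). Shiftedness turns one missing set into many, in two ways.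

* As `n ^ (m - 1)` is small against `n ^ m`, all `m`-sets below the top `M` elements of `[n]` belong to
  `F`, where `M` is a small constant fraction of `n` (`low_sets`).
* Call `B`, a set of elements near `n`, heavy if `X ∪ B ∉ F` for `X` the top `m - 1` elements of an initial
  segment `[L]`, where `L = m (M + c + 1)`. A heavy `B` accounts for almost `(n choose m - 1)` missing sets
  `A ∪ B`, so at most `2c + 2` subsets of the last `2c + 2` elements are heavy (`heavy_count`). Heaviness is
  inherited by subsets and preserved by raising elements (`heavy_mono`, `heavy_step`).

A set that is not heavy is light: any `m - 1` elements of `[L]` complete it to a member of `F`. Hence, if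
`{p}` is light, `[p]` can be packed with members of `F` of size `m`, and any disjoint light sets above `p`
can be absorbed at a cost of `m - 1` elements of `[L]` each (`packing_with`). The singleton `{n - 2c - 1}` is
always light, since otherwise `∅` and `2c + 2` singletons would be heavy.

* If `{n - 2c}` is heavy, then `∅` and `2c + 1` singletons are heavy, so every pair in the last `2c + 1`
  elements is light. A member of `F` not in `Q` could then be completed to an `s`-matching, using light
  pairs, so `F ⊆ Q` (`NearFull.Qmiss_subset`).
* If `{n - 2c}` is light and `c ≥ 2`, the `c` nested pairs on the last `2c` elements cannot all be light,
  as they would give an `s`-matching; but one heavy nested pair forces more than `2c + 2` heavy sets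
  (`NearFull.heavy_of_two_le`).
* If `{n - 2c}` is light and `c = 1`, packing `[n - 2]` shows `F ⊆ W`, and `W` is no larger than `Q`
  (`NearFull.card_Qmiss_le_of_one`).
-/

/-! ### Packing disjoint members of a shifted family -/

/-- `F` contains `k` pairwise disjoint sets, all of them inside `Y`. -/
def Packs (F : Finset (Finset ℕ)) (k : ℕ) (Y : Finset ℕ) : Prop :=
  ∃ M ⊆ F, M.card = k ∧ (M : Set (Finset ℕ)).PairwiseDisjoint id ∧ ∀ A ∈ M, A ⊆ Y

/-- Closure under replacing an element by a smaller positive one; for families of subsets of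
`[n]` this is the one-step form of being shifted. -/
def StepShifted (F : Finset (Finset ℕ)) : Prop :=
  ∀ A ∈ F, ∀ i j : ℕ, 1 ≤ i → i < j → j ∈ A → i ∉ A → insert i (A.erase j) ∈ F

/-- `F` is closed under taking supersets inside `[n]`. -/
def UpClosed (n : ℕ) (F : Finset (Finset ℕ)) : Prop :=
  ∀ A ∈ F, ∀ B ⊆ ground n, A ⊆ B → B ∈ F

lemma Packs.hasMatching {F : Finset (Finset ℕ)} {k : ℕ} {Y : Finset ℕ} (h : Packs F k Y) :
    HasMatching F k := by
  obtain ⟨M, h1, h2, h3, -⟩ := h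
  exact ⟨M, h1, h2, h3⟩

lemma packs_zero (F : Finset (Finset ℕ)) (Y : Finset ℕ) : Packs F 0 Y :=
  ⟨∅, by simp, by simp, by simp, by simp⟩

lemma Packs.insert {F : Finset (Finset ℕ)} (h0 : ∅ ∉ F) {k : ℕ} {Y A : Finset ℕ}
    (h : Packs F k Y) (hA : A ∈ F) (hd : Disjoint A Y) : Packs F (k + 1) (A ∪ Y) := by
  obtain ⟨M, h1, h2, h3, h4⟩ := h
  have hAM : A ∉ M := by
    intro hM
    have h5 := h4 A hM
    have : A = ∅ := by
      have := disjoint_of_subset_right h5 hd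
      simpa using this
    exact h0 (this ▸ hA)
  refine ⟨Insert.insert A M, ?_, ?_, ?_, ?_⟩
  · intro B hB
    rcases mem_insert.1 hB with rfl | hB
    · exact hA
    · exact h1 hB
  · rw [card_insert_of_notMem hAM, h2]
  · rw [coe_insert]
    refine h3.insert fun B hB _ => ?_
    exact disjoint_of_subset_right (h4 B hB) hd
  · intro B hB
    rcases mem_insert.1 hB with rfl | hB
    · exact subset_union_left
    · exact (h4 B hB).trans subset_union_right

lemma Packs.mono {F : Finset (Finset ℕ)} {k : ℕ} {Y Y' : Finset ℕ}
    (h : Packs F k Y) (hY : Y ⊆ Y') : Packs F k Y' := by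
  obtain ⟨M, h1, h2, h3, h4⟩ := h
  exact ⟨M, h1, h2, h3, fun A hA => (h4 A hA).trans hY⟩

/-- In a shifted family the part `A` of a member may be moved to any equally large `A'` whose new
elements all lie below the abandoned ones. -/
lemma exchange {F : Finset (Finset ℕ)} (hF : StepShifted F) {A' B : Finset ℕ}
    (hA'B : Disjoint A' B) (hpos : ∀ x ∈ A', 1 ≤ x) (A : Finset ℕ) (hc : A.card = A'.card)
    (hAB : Disjoint A B) (hlt : ∀ x ∈ A' \ A, ∀ y ∈ A \ A', x < y) (hA : A ∪ B ∈ F) :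
    A' ∪ B ∈ F := by
  induction hk : (A \ A').card generalizing A with
  | zero =>
    have h1 : A ⊆ A' := by simpa using hk
    rwa [eq_of_subset_of_card_le h1 hc.ge] at hA
  | succ k ih =>
    obtain ⟨y, hy⟩ : (A \ A').Nonempty := card_pos.1 (by omega)
    obtain ⟨x, hx⟩ : (A' \ A).Nonempty := card_pos.1 (by
      have h1 := card_sdiff_add_card_inter A A'
      have h2 := card_sdiff_add_card_inter A' A
      rw [inter_comm] at h2; omega)
    have hxy := hlt x hx y hy
    rw [mem_sdiff] at hx hy
    have hxB : x ∉ B := disjoint_left.1 hA'B hx.1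
    have hyB : y ∉ B := disjoint_left.1 hAB hy.1
    refine ih (insert x (A.erase y)) ?_ ?_ ?_ ?_ ?_
    · rw [card_insert_of_notMem (by simp [hx.2]), card_erase_of_mem hy.1]
      have := card_pos.2 ⟨y, hy.1⟩
      omega
    · rw [disjoint_left] at hAB ⊢
      intro a ha
      grind
    · intro a ha b hb
      exact hlt a (by grind) b (by grind)
    · have h1 := hF _ hA x y (hpos x hx.1) hxy (by simp [hy.1]) (by simp [hx.2, hxB])
      rwa [erase_union_distrib, erase_eq_of_notMem hyB, ← insert_union] at h1
    · rw [insert_sdiff_of_mem _ hx.1, erase_sdiff_comm, card_erase_of_mem (by simp [hy]), hk]; rfl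

/-- The greedy packing: elements of `Y` above `r` are completed by `m - 1` elements of `[L]`; once they
are exhausted, the remaining elements of `Y` are grouped into arbitrary `m`-sets. -/
lemma packing {F : Finset (Finset ℕ)} (h0 : ∅ ∉ F) {m L r p : ℕ} (hm : 1 ≤ m) (hLr : L ≤ r)
    (hlow : ∀ A ⊆ ground r, A.card = m → A ∈ F)
    (hone : ∀ A ⊆ ground L, A.card = m - 1 → ∀ y, r < y → y ≤ p → A ∪ {y} ∈ F)
    (k : ℕ) (Y : Finset ℕ) (hY : Y ⊆ ground p) (hcard : m * k ≤ Y.card)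
    (hL : (m - 1) * (Y.filter (r < ·)).card ≤ (Y ∩ ground L).card) : Packs F k Y := by
  induction k generalizing Y with
  | zero => exact packs_zero _ _
  | succ k ih =>
    rw [Nat.mul_succ] at hcard
    by_cases htop : (Y.filter (r < ·)).Nonempty
    · obtain ⟨y, hy⟩ := htop
      have h1 : m - 1 ≤ (Y ∩ ground L).card :=
        le_trans (Nat.le_mul_of_pos_right _ (card_pos.2 ⟨y, hy⟩)) hL
      obtain ⟨A, hA, hAc⟩ := exists_subset_card_eq h1
      rw [mem_filter] at hy
      have hAL : A ⊆ ground L := hA.trans inter_subset_right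
      have hAY : A ⊆ Y := hA.trans inter_subset_left
      have hyA : y ∉ A := fun h => by
        have := hAL h; simp only [ground, mem_Icc] at this; omega
      have hyp : y ≤ p := by have := hY hy.1; simp only [ground, mem_Icc] at this; omega
      have hF := hone A hAL hAc y hy.2 hyp
      have hsub : A ∪ {y} ⊆ Y := union_subset hAY (by simpa using hy.1)
      have hc2 : (A ∪ {y}).card = m := by
        rw [card_union_of_disjoint (by simpa using hyA), hAc, card_singleton]; omega
      have hP := (ih (Y \ (A ∪ {y})) (sdiff_subset.trans hY)
        (by rw [card_sdiff_of_subset hsub, hc2]; omega) ?_).insert h0 hF disjoint_sdiff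
      · exact hP.mono (union_subset hsub sdiff_subset)
      · have e1 : (Y \ (A ∪ {y})).filter (r < ·) = (Y.filter (r < ·)).erase y := by
          ext z; simp only [mem_filter, mem_sdiff, mem_union, mem_singleton, mem_erase]
          constructor
          · rintro ⟨⟨h1, h2⟩, h3⟩; exact ⟨fun h => h2 (Or.inr h), h1, h3⟩
          · rintro ⟨h1, h2, h3⟩
            refine ⟨⟨h2, ?_⟩, h3⟩
            rintro (h | h)
            · have := hAL h; simp only [ground, mem_Icc] at this; omega
            · exact h1 h
        have e2 : (Y \ (A ∪ {y})) ∩ ground L = (Y ∩ ground L) \ A := by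
          ext z; simp only [mem_inter, mem_sdiff, mem_union, mem_singleton]
          constructor
          · rintro ⟨⟨h1, h2⟩, h3⟩; exact ⟨⟨h1, h3⟩, fun h => h2 (Or.inl h)⟩
          · rintro ⟨⟨h1, h3⟩, h2⟩
            refine ⟨⟨h1, ?_⟩, h3⟩
            rintro (h | rfl)
            · exact h2 h
            · simp only [ground, mem_Icc] at h3; omega
        rw [e1, e2, card_erase_of_mem (by simp [hy]), card_sdiff_of_subset hA, hAc, Nat.mul_sub,
          mul_one]
        omega
    · have hYr : Y ⊆ ground r := by
        intro z hz
        have h1 := hY hz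
        simp only [ground, mem_Icc] at h1 ⊢
        refine ⟨h1.1, ?_⟩
        by_contra h
        exact htop ⟨z, by simp [hz]; omega⟩
      obtain ⟨A, hA, hAc⟩ := exists_subset_card_eq (show m ≤ Y.card by omega)
      have hP := (ih (Y \ A) (sdiff_subset.trans hY)
        (by rw [card_sdiff_of_subset hA, hAc]; omega) ?_).insert h0 (hlow A (hA.trans hYr) hAc)
          disjoint_sdiff
      · exact hP.mono (union_subset hA sdiff_subset)
      · have : (Y \ A).filter (r < ·) = ∅ := by
          rw [not_nonempty_iff_eq_empty] at htop
          exact subset_empty.1 (htop ▸ filter_subset_filter _ sdiff_subset)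
        simp [this]

/-- The greedy packing with prescribed sets: each set of `𝓑` is completed by `m - 1` elements of
`Y ∩ [L]`, and `k` further sets are found in the rest of `Y`. -/
lemma packing_with {F : Finset (Finset ℕ)} (h0 : ∅ ∉ F) {m L r p : ℕ} (hm : 1 ≤ m) (hLr : L ≤ r)
    (hlow : ∀ A ⊆ ground r, A.card = m → A ∈ F)
    (hone : ∀ A ⊆ ground L, A.card = m - 1 → ∀ y, r < y → y ≤ p → A ∪ {y} ∈ F)
    (k : ℕ) (𝓑 : Finset (Finset ℕ)) (hdis : (𝓑 : Set (Finset ℕ)).PairwiseDisjoint id)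
    (hBp : ∀ B ∈ 𝓑, ∀ x ∈ B, p < x)
    (hBF : ∀ B ∈ 𝓑, ∀ A ⊆ ground L, A.card = m - 1 → A ∪ B ∈ F)
    (Y : Finset ℕ) (hY : Y ⊆ ground p) (hcard : m * k + (m - 1) * 𝓑.card ≤ Y.card)
    (hL : (m - 1) * ((Y.filter (r < ·)).card + 𝓑.card) ≤ (Y ∩ ground L).card) :
    Packs F (k + 𝓑.card) (Y ∪ 𝓑.biUnion id) := by
  induction 𝓑 using Finset.induction_on generalizing Y with
  | empty => exact (packing h0 hm hLr hlow hone k Y hY (by simpa using hcard)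
      (by simpa using hL)).mono subset_union_left
  | insert B 𝓑 hB ih =>
    rw [card_insert_of_notMem hB] at hcard hL ⊢
    rw [Nat.mul_succ] at hcard
    rw [← add_assoc, Nat.mul_succ] at hL
    obtain ⟨A, hA, hAc⟩ := exists_subset_card_eq (show m - 1 ≤ (Y ∩ ground L).card by omega)
    have hAL : A ⊆ ground L := hA.trans inter_subset_right
    have hAY : A ⊆ Y := hA.trans inter_subset_left
    have hF := hBF B (mem_insert_self _ _) A hAL hAc
    have hP := ih (hdis.subset (by simp)) (fun B' hB' => hBp B' (mem_insert_of_mem hB'))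
      (fun B' hB' => hBF B' (mem_insert_of_mem hB')) (Y \ A) (sdiff_subset.trans hY)
      (by rw [card_sdiff_of_subset hAY, hAc]; omega) ?_
    · have hd : Disjoint (A ∪ B) (Y \ A ∪ 𝓑.biUnion id) := by
        have hlt : ∀ B' ∈ insert B 𝓑, Disjoint Y B' := fun B' hB' => by
          rw [disjoint_left]; intro x hx hx'
          have h1 := hBp B' hB' x hx'
          have h2 := hY hx
          simp only [ground, mem_Icc] at h2; omega
        rw [disjoint_union_left, disjoint_union_right, disjoint_union_right]
        refine ⟨⟨disjoint_sdiff, ?_⟩, ?_, ?_⟩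
        · rw [disjoint_biUnion_right]
          exact fun B' hB' => disjoint_of_subset_left hAY (hlt B' (mem_insert_of_mem hB'))
        · exact (disjoint_of_subset_left sdiff_subset (hlt B (mem_insert_self _ _))).symm
        · rw [disjoint_biUnion_right]
          intro B' hB'
          exact hdis (by simp) (by simp [hB']) (by rintro rfl; exact hB hB')
      refine (hP.insert h0 hF hd).mono ?_
      rw [biUnion_insert]
      intro z; simp only [mem_union, mem_sdiff, id]
      rintro ((h | h) | (h | h))
      · exact Or.inl (hAY h)
      · exact Or.inr (Or.inl h)
      · exact Or.inl h.1
      · exact Or.inr (Or.inr h)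
    · have e2 : (Y \ A) ∩ ground L = (Y ∩ ground L) \ A := by
        ext z; simp only [mem_inter, mem_sdiff]; tauto
      have e1 : ((Y \ A).filter (r < ·)).card ≤ (Y.filter (r < ·)).card :=
        card_le_card (filter_subset_filter _ sdiff_subset)
      rw [e2, card_sdiff_of_subset hA, hAc]
      have := Nat.mul_le_mul_left (m - 1) (Nat.add_le_add_right e1 𝓑.card)
      omega

/-! ### Shifting -/

/-- The shifting operator `S_{ij}` does not create an `s`-matching. The hypotheses list what is needed
about the image `F'`: each new member comes from an old one by replacing `j` by `i`, and a member
that contains `j` but not `i` survives only if its own shift was already present. -/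
lemma shift_noMatching {F F' : Finset (Finset ℕ)} {s i j : ℕ} (hij : i ≠ j) (h0 : ∅ ∉ F)
    (hnew : ∀ A ∈ F', A ∉ F → i ∈ A ∧ j ∉ A ∧ insert j (A.erase i) ∈ F)
    (hold : ∀ A ∈ F', j ∈ A → i ∉ A → insert i (A.erase j) ∈ F)
    (hF : ¬ HasMatching F s) : ¬ HasMatching F' s := by
  rintro ⟨M, hM, hMc, hMd⟩
  by_cases hsub : M ⊆ F
  · exact hF ⟨M, hsub, hMc, hMd⟩
  obtain ⟨A, hAM, hAF⟩ := not_subset.1 hsub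
  obtain ⟨hiA, hjA, hA'⟩ := hnew A (hM hAM) hAF
  have hdis : ∀ B ∈ M, B ≠ A → Disjoint B A := fun B hB hne => hMd hB hAM hne
  have hrest : ∀ B ∈ M, B ≠ A → i ∉ B ∧ B ∈ F := by
    intro B hB hne
    have hiB : i ∉ B := fun h => (disjoint_left.1 (hdis B hB hne) h) hiA
    exact ⟨hiB, by by_contra h; exact hiB (hnew B (hM hB) h).1⟩
  have hMpos : 1 ≤ M.card := card_pos.2 ⟨A, hAM⟩
  by_cases hC : ∃ C ∈ M, C ≠ A ∧ j ∈ C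
  · obtain ⟨C, hCM, hCA, hjC⟩ := hC
    have hiC := (hrest C hCM hCA).1
    have hC' := hold C (hM hCM) hjC hiC
    have hACd := hdis C hCM hCA
    have hP : Packs F ((M.erase A).erase C).card (((M.erase A).erase C).biUnion id) := by
      refine ⟨_, fun B hB => ?_, rfl, hMd.subset ?_, fun B hB => subset_biUnion_of_mem id hB⟩
      · simp only [mem_erase] at hB
        exact (hrest B hB.2.2 hB.2.1).2
      · intro B hB; simp at hB; exact hB.1.1
    have key : ∀ B ∈ (M.erase A).erase C, Disjoint A B ∧ Disjoint C B := fun B hB => by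
      simp only [mem_erase] at hB
      exact ⟨(hdis B hB.2.2 hB.2.1).symm, (hMd hB.2.2 hCM hB.1).symm⟩
    have hP1 := hP.insert h0 hA' (by
      rw [disjoint_biUnion_right]
      intro B hB
      have h1 := key B hB
      rw [disjoint_left] at h1 ⊢
      rw [disjoint_left] at h1
      intro x hx
      rcases mem_insert.1 hx with rfl | hx
      · exact h1.2 hjC
      · exact h1.1 (mem_of_mem_erase hx))
    have hP2 := hP1.insert h0 hC' (by
      rw [disjoint_union_right, disjoint_biUnion_right]
      constructor
      · rw [disjoint_left] at hACd ⊢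
        intro x hx hx'
        simp only [mem_insert, mem_erase] at hx hx'
        rcases hx with rfl | hx
        · rcases hx' with h | h
          · exact hij h
          · exact h.1 rfl
        · rcases hx' with h | h
          · exact hx.1 h
          · exact hACd hx.2 h.2
      · intro B hB
        have h1 := key B hB
        rw [disjoint_left, disjoint_left] at h1
        rw [disjoint_left]
        intro x hx
        rcases mem_insert.1 hx with rfl | hx
        · exact h1.1 hiA
        · exact h1.2 (mem_of_mem_erase hx))
    rw [card_erase_of_mem (mem_erase.2 ⟨hCA, hCM⟩), card_erase_of_mem hAM] at hP2
    have h2 : 1 ≤ (M.erase A).card := card_pos.2 ⟨C, mem_erase.2 ⟨hCA, hCM⟩⟩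
    rw [card_erase_of_mem hAM] at h2
    have h3 := hP2.hasMatching
    rw [show M.card - 1 - 1 + 1 + 1 = s by omega] at h3
    exact hF h3
  · push Not at hC
    have hP : Packs F (M.erase A).card ((M.erase A).biUnion id) := by
      refine ⟨_, fun B hB => ?_, rfl, hMd.subset ?_, fun B hB => subset_biUnion_of_mem id hB⟩
      · simp only [mem_erase] at hB
        exact (hrest B hB.2 hB.1).2
      · intro B hB; simp at hB; exact hB.1
    have hP1 := hP.insert h0 hA' (by
      rw [disjoint_biUnion_right]
      intro B hB
      simp only [mem_erase] at hB
      have h1 := (hdis B hB.2 hB.1).symm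
      rw [disjoint_left] at h1 ⊢
      intro x hx
      rcases mem_insert.1 hx with rfl | hx
      · exact hC B hB.2 hB.1
      · exact h1 (mem_of_mem_erase hx))
    rw [card_erase_of_mem hAM] at hP1
    have h3 := hP1.hasMatching
    rw [show M.card - 1 + 1 = s by omega] at h3
    exact hF h3

/-- The empty set can be traded for a nonempty one without creating an `s`-matching. -/
lemma exists_noEmpty {n s : ℕ} (hsn : s ≤ n) {F : Finset (Finset ℕ)}
    (hF : F ⊆ (ground n).powerset) (hM : ¬ HasMatching F s) :
    ∃ F' ⊆ (ground n).powerset, ∅ ∉ F' ∧ ¬ HasMatching F' s ∧ F.card = F'.card := by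
  by_cases h0 : ∅ ∈ F
  swap
  · exact ⟨F, hF, h0, hM, rfl⟩
  obtain ⟨A, hA, hA0, hAF⟩ : ∃ A ⊆ ground n, A ≠ ∅ ∧ A ∉ F := by
    by_contra hcon
    push Not at hcon
    refine hM ⟨(ground s).image (fun x => {x}), ?_, ?_, ?_⟩
    · intro B hB
      obtain ⟨x, hx, rfl⟩ := mem_image.1 hB
      refine hcon _ ?_ (by simp)
      simp only [ground, mem_Icc, singleton_subset_iff] at hx ⊢
      omega
    · rw [card_image_of_injective _ (fun a b h => by simpa using h)]; simp [ground]
    · intro B hB C hC hne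
      simp only [coe_image, Set.mem_image] at hB hC
      obtain ⟨x, -, rfl⟩ := hB
      obtain ⟨y, -, rfl⟩ := hC
      simp only [Function.onFun, id, disjoint_singleton]
      rintro rfl; exact hne rfl
  refine ⟨insert A (F.erase ∅), ?_, ?_, ?_, ?_⟩
  · intro B hB
    rcases mem_insert.1 hB with rfl | hB
    · exact mem_powerset.2 hA
    · exact hF (mem_of_mem_erase hB)
  · simp [Ne.symm hA0]
  · rintro ⟨M, hMF, hMc, hMd⟩
    have h1 : ∅ ∉ M := fun h => by have := hMF h; simp [Ne.symm hA0] at this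
    by_cases hAM : A ∈ M
    · refine hM ⟨insert ∅ (M.erase A), ?_, ?_, ?_⟩
      · intro B hB
        rcases mem_insert.1 hB with rfl | hB
        · exact h0
        · have := hMF (mem_of_mem_erase hB)
          rw [mem_insert] at this
          rcases this with rfl | h
          · simp at hB
          · exact mem_of_mem_erase h
      · rw [card_insert_of_notMem (fun h => h1 (mem_of_mem_erase h)), card_erase_of_mem hAM]
        have := card_pos.2 ⟨A, hAM⟩
        omega
      · rw [coe_insert]
        exact (hMd.subset (by simp)).insert fun B _ _ => by simp
    · refine hM ⟨M, fun B hB => ?_, hMc, hMd⟩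
      have := hMF hB
      rw [mem_insert] at this
      rcases this with rfl | h
      · exact absurd hB hAM
      · exact mem_of_mem_erase h
  · rw [card_insert_of_notMem (fun h => hAF (mem_of_mem_erase h)), card_erase_of_mem h0]
    have := card_pos.2 ⟨_, h0⟩
    omega

/-- The extremal family may be taken closed under supersets and shifted: among the largest
families of nonempty sets take one whose members have least total sum. -/
lemma exists_shifted {n s : ℕ} (hsn : s ≤ n) {F₀ : Finset (Finset ℕ)}
    (hF₀ : F₀ ⊆ (ground n).powerset) (hM₀ : ¬ HasMatching F₀ s) :
    ∃ F ⊆ (ground n).powerset, ∅ ∉ F ∧ ¬ HasMatching F s ∧ F₀.card ≤ F.card ∧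
      UpClosed n F ∧ StepShifted F := by
  classical
  obtain ⟨F₁, h1, h2, h3, h4⟩ := exists_noEmpty hsn hF₀ hM₀
  obtain ⟨Fm, hFm, hmax⟩ := exists_max_image
    ((ground n).powerset.powerset.filter (fun F => ∅ ∉ F ∧ ¬ HasMatching F s)) Finset.card
    ⟨F₁, by simp only [mem_filter, mem_powerset]; exact ⟨h1, h2, h3⟩⟩
  -- Shifting keeps the size and lowers the sum of all elements of all members.
  obtain ⟨F, hF, hmin⟩ := exists_min_image
    ((ground n).powerset.powerset.filter
      (fun F => (∅ ∉ F ∧ ¬ HasMatching F s) ∧ Fm.card ≤ F.card))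
    (fun F => ∑ A ∈ F, ∑ x ∈ A, x)
    ⟨Fm, by simp only [mem_filter, mem_powerset] at hFm ⊢; exact ⟨hFm.1, hFm.2, le_rfl⟩⟩
  simp only [mem_filter, mem_powerset] at hFm hmax hF hmin
  obtain ⟨hFg, ⟨hF0, hFM⟩, hFc⟩ := hF
  refine ⟨F, hFg, hF0, hFM, ?_, ?_, ?_⟩
  · rw [h4]; exact (hmax F₁ ⟨h1, h2, h3⟩).trans hFc
  -- A superset `B ∉ F` of a member could be added, against the maximality of `F`.
  · intro A hA B hB hAB
    by_contra hBF
    have hA0 : A ≠ ∅ := fun h => hF0 (h ▸ hA)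
    have hB0 : B ≠ ∅ := by rintro rfl; exact hA0 (subset_empty.1 hAB)
    have hno : ¬ HasMatching (insert B F) s := by
      rintro ⟨M, hMF, hMc, hMd⟩
      by_cases hBM : B ∈ M
      · have hP : Packs F (M.erase B).card ((M.erase B).biUnion id) := by
          refine ⟨_, fun C hC => ?_, rfl, hMd.subset ?_, fun C hC => subset_biUnion_of_mem id hC⟩
          · have := hMF (mem_of_mem_erase hC)
            rw [mem_insert] at this
            rcases this with rfl | h
            · simp at hC
            · exact h
          · intro C hC; simp at hC; exact hC.1
        have hP1 := hP.insert hF0 hA (by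
          rw [disjoint_biUnion_right]
          intro C hC
          rw [mem_erase] at hC
          exact disjoint_of_subset_left hAB (hMd hBM hC.2 (Ne.symm hC.1)))
        rw [card_erase_of_mem hBM] at hP1
        have h5 := card_pos.2 ⟨B, hBM⟩
        have h3 := hP1.hasMatching
        rw [show M.card - 1 + 1 = s by omega] at h3
        exact hFM h3
      · refine hFM ⟨M, fun C hC => ?_, hMc, hMd⟩
        have := hMF hC
        rw [mem_insert] at this
        rcases this with rfl | h
        · exact absurd hC hBM
        · exact h
    have := hmax (insert B F) ⟨insert_subset (mem_powerset.2 hB) hFg, by simp [hF0, Ne.symm hB0], hno⟩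
    rw [card_insert_of_notMem hBF] at this
    omega
  · intro A hA i j hi hij hjA hiA
    by_contra hcon
    set f : Finset ℕ → Finset ℕ := fun B =>
      if j ∈ B ∧ i ∉ B ∧ insert i (B.erase j) ∉ F then insert i (B.erase j) else B with hf
    have hback : ∀ B : Finset ℕ, j ∈ B → i ∉ B → insert j ((insert i (B.erase j)).erase i) = B := by
      intro B h1 h2
      rw [erase_insert (by simp [h2]), insert_erase h1]
    have hinj : Set.InjOn f (F : Set (Finset ℕ)) := by
      intro B hB C hC hBC
      simp only [hf] at hBC
      split_ifs at hBC with hb hc hc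
      · rw [← hback B hb.1 hb.2.1, ← hback C hc.1 hc.2.1, hBC]
      · exact absurd (hBC ▸ hC) hb.2.2
      · exact absurd (hBC ▸ hB) hc.2.2
      · exact hBC
    have hsumlt : ∀ B : Finset ℕ, j ∈ B → i ∉ B →
        ∑ x ∈ insert i (B.erase j), x < ∑ x ∈ B, x := by
      intro B h1 h2
      rw [sum_insert (by simp [h2]), ← add_sum_erase B (fun x => x) h1]
      omega
    have hlt : ∑ B ∈ F.image f, ∑ x ∈ B, x < ∑ B ∈ F, ∑ x ∈ B, x := by
      rw [sum_image hinj]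
      refine sum_lt_sum (fun B _ => ?_) ⟨A, hA, ?_⟩
      · simp only [hf]
        split_ifs with hb
        · exact (hsumlt B hb.1 hb.2.1).le
        · exact le_rfl
      · simp only [hf]
        rw [if_pos ⟨hjA, hiA, hcon⟩]
        exact hsumlt A hjA hiA
    refine absurd (hmin (F.image f) ⟨?_, ⟨?_, ?_⟩, ?_⟩) (not_le.2 hlt)
    · intro B hB
      obtain ⟨C, hC, rfl⟩ := mem_image.1 hB
      have hCg := mem_powerset.1 (hFg hC)
      simp only [hf]
      split_ifs with hc
      · rw [mem_powerset]
        refine insert_subset ?_ ((erase_subset _ _).trans hCg)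
        have := hCg hc.1
        simp only [ground, mem_Icc] at this ⊢
        omega
      · exact mem_powerset.2 hCg
    · intro hB
      obtain ⟨C, hC, h⟩ := mem_image.1 hB
      simp only [hf] at h
      split_ifs at h with hc
      · simp at h
      · exact hF0 (h ▸ hC)
    · refine shift_noMatching (i := i) (j := j) hij.ne hF0 ?_ ?_ hFM
      · intro B hB hBF
        obtain ⟨C, hC, rfl⟩ := mem_image.1 hB
        by_cases hc : j ∈ C ∧ i ∉ C ∧ insert i (C.erase j) ∉ F
        · have e : f C = insert i (C.erase j) := if_pos hc
          rw [e, hback C hc.1 hc.2.1]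
          exact ⟨by simp, by simp [hij.ne'], hC⟩
        · have e : f C = C := if_neg hc
          exact absurd (by rw [e]; exact hC) hBF
      · intro B hB hjB hiB
        obtain ⟨C, hC, rfl⟩ := mem_image.1 hB
        by_cases hc : j ∈ C ∧ i ∉ C ∧ insert i (C.erase j) ∉ F
        · have e : f C = insert i (C.erase j) := if_pos hc
          rw [e] at hiB; simp at hiB
        · have e : f C = C := if_neg hc
          rw [e] at hjB hiB ⊢
          by_contra h
          exact hc ⟨hjB, hiB, h⟩
    · rw [card_image_of_injOn hinj]; exact hFc

/-! ### Counting the sets missing from `Q` -/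

/-- The sets missing from `Q(m,s,ℓ)`. -/
def Qmiss (m s c : ℕ) : Finset (Finset ℕ) :=
  (ground (m * s + c)).powerset.filter
    (fun P => ¬ 2 * m ≤ P.card + (P ∩ ground (m * s - c - 1)).card)

/-- An upper bound for the number of sets missing from `Q(m,s,ℓ)`, as a function of `n = ms + c`. -/
def missBound (m c n : ℕ) : ℕ :=
  (2 * c + 2) * n.choose (m - 1) + 2 ^ (2 * c + 1) * ∑ j ∈ range (m - 1), n.choose j

lemma ground_split {n' n : ℕ} {P : Finset ℕ} (hP : P ⊆ ground n) :
    P ∩ ground n' ∪ P ∩ Ioc n' n = P := by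
  ext z
  have := @hP z
  simp only [ground, mem_union, mem_inter, mem_Icc, mem_Ioc] at this ⊢
  constructor
  · tauto
  · intro h
    have h1 := this h
    by_cases h2 : z ≤ n'
    · exact Or.inl ⟨h, h1.1, h2⟩
    · exact Or.inr ⟨h, by omega, h1.2⟩

lemma card_split {n' n : ℕ} {P : Finset ℕ} (hP : P ⊆ ground n) :
    (P ∩ ground n').card + (P ∩ Ioc n' n).card = P.card := by
  rw [← card_union_of_disjoint, ground_split hP]
  rw [disjoint_left]
  intro z hz hz'
  simp only [ground, mem_inter, mem_Icc, mem_Ioc] at hz hz'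
  omega

/-- A set missing from `Q` has at most `m - 1` elements in `[n']`, where `n' = ms - c - 1`, and if it has
`m - 1` there, then at most one more element above. -/
lemma card_Qmiss_le {m s c : ℕ} (hm : 1 ≤ m) (hs : c + 1 ≤ m * s) :
    (Qmiss m s c).card ≤ missBound m c (m * s + c) := by
  set n := m * s + c with hn
  set n' := m * s - c - 1 with hn'
  set T₁ := powersetCard (m - 1) (ground n') ×ˢ ((Ioc n' n).powerset.filter (·.card ≤ 1)) with hT₁
  set T₂ := (range (m - 1)).biUnion (fun j => powersetCard j (ground n')) ×ˢ (Ioc n' n).powerset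
    with hT₂
  have h1 : (Qmiss m s c).card ≤ (T₁ ∪ T₂).card := by
    refine card_le_card_of_injOn (fun P => (P ∩ ground n', P ∩ Ioc n' n)) ?_ ?_
    · intro P hP
      have hP := mem_coe.1 hP
      simp only [Qmiss, mem_filter, mem_powerset, not_le] at hP
      obtain ⟨hPg, hPc⟩ := hP
      rw [← hn] at hPg
      rw [← hn'] at hPc
      have h2 := card_split (n' := n') hPg
      simp only [hT₁, hT₂, coe_union, coe_product, Set.mem_union, Set.mem_prod, mem_coe,
        mem_powersetCard, mem_filter, mem_powerset, mem_biUnion, mem_range, inter_subset_right,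
        true_and, and_true]
      by_cases h3 : (P ∩ ground n').card = m - 1
      · left; exact ⟨h3, by omega⟩
      · right; exact ⟨_, by omega, rfl⟩
    · intro P hP P' hP' h
      have hP := mem_coe.1 hP
      have hP' := mem_coe.1 hP'
      simp only [Qmiss, mem_filter, mem_powerset] at hP hP'
      simp only [Prod.mk.injEq] at h
      rw [← ground_split (n' := n') hP.1, ← ground_split (n' := n') hP'.1, h.1, h.2]
  have hD : (Ioc n' n).card = 2 * c + 1 := by rw [Nat.card_Ioc]; omega
  have hg : (ground n').card = n' := by simp [ground]
  have h2 : T₁.card ≤ (2 * c + 2) * n.choose (m - 1) := by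
    rw [hT₁, card_product, card_powersetCard, hg, mul_comm]
    refine Nat.mul_le_mul ?_ (Nat.choose_le_choose _ (by omega))
    have : (Ioc n' n).powerset.filter (·.card ≤ 1) ⊆
        insert ∅ ((Ioc n' n).image (fun x => ({x} : Finset ℕ))) := by
      intro B hB
      simp only [mem_filter, mem_powerset] at hB
      rcases Nat.le_one_iff_eq_zero_or_eq_one.1 hB.2 with h | h
      · rw [card_eq_zero] at h; simp [h]
      · obtain ⟨x, rfl⟩ := card_eq_one.1 h
        exact mem_insert_of_mem (mem_image_of_mem _ (by simpa using hB.1))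
    refine (card_le_card this).trans ((card_insert_le _ _).trans ?_)
    have := card_image_le (s := Ioc n' n) (f := fun x => ({x} : Finset ℕ))
    omega
  have h3 : T₂.card ≤ 2 ^ (2 * c + 1) * ∑ j ∈ range (m - 1), n.choose j := by
    rw [hT₂, card_product, card_powerset, hD, mul_comm]
    refine Nat.mul_le_mul_left _ (card_biUnion_le.trans (sum_le_sum fun j _ => ?_))
    rw [card_powersetCard, hg]
    exact Nat.choose_le_choose _ (by omega)
  exact h1.trans ((card_union_le _ _).trans (Nat.add_le_add h2 h3))

/-- For large `n` a number `M`, linear in `n` with a small constant, serves as the length of the top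
segment of `[n]`, with `m (M + c + 1)` elements reserved at the bottom. The leading term of `missBound`
is `(2c + 2) (n choose m - 1)`, so it is below `M choose m`, which has degree `m` in `n`, and below
`2c + 3` binomial coefficients whose upper entry is close enough to `n`. -/
lemma exists_params (m c : ℕ) (hm : 1 ≤ m) : ∃ n0 : ℕ, ∀ n ≥ n0, ∃ M : ℕ,
    m * (M + c + 1) + M + (2 * c + 2) ≤ n ∧ missBound m c n ≤ M.choose m ∧
    missBound m c n ≤ (2 * c + 3) * (n - (2 * c + 2) - m * (M + c + 1)).choose (m - 1) := by
  obtain ⟨k, hmk⟩ : ∃ k, m = k + 1 := ⟨m - 1, by omega⟩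
  have hk : m - 1 = k := by omega
  -- `M = n / q` loses a factor at most `1 / (2m (2c + 3))` in the upper entry.
  obtain ⟨q, hq⟩ : ∃ q, q = 4 * m ^ 2 * (2 * c + 3) := ⟨_, rfl⟩
  obtain ⟨w0, hw0⟩ : ∃ w, w = 2 * c + 2 + m * (c + 1) + m := ⟨_, rfl⟩
  obtain ⟨C1, hC1⟩ : ∃ x, x = 2 ^ (2 * c + 1) * k := ⟨_, rfl⟩
  have hq1 : 4 * m ≤ q := by
    rw [hq]; nlinarith [Nat.zero_le (m * m * c), Nat.mul_le_mul_left m hm]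
  refine ⟨q * w0 + 2 * (q * m) + 2 * (k.factorial * C1) +
    (2 * q) ^ m * m.factorial * (2 * c + 2 + C1) + 1, fun n hn => ⟨n / q, ?_⟩⟩
  have hn1 : q * w0 ≤ n := by omega
  have hn2 : 2 * (q * m) ≤ n := by omega
  have hn3 : 2 * (k.factorial * C1) ≤ n := by omega
  have hn4 : (2 * q) ^ m * m.factorial * (2 * c + 2 + C1) ≤ n := by omega
  have hqpos : 0 < q := by omega
  have hnpos : 0 < n := by omega
  clear hn
  have hM1 : q * (n / q) ≤ n := Nat.mul_div_le n q
  have hM2 : n < q * (n / q) + q := by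
    have := Nat.lt_mul_div_succ n hqpos
    rw [mul_add, mul_one] at this; exact this
  generalize n / q = M at hM1 hM2 ⊢
  obtain ⟨W, hW⟩ : ∃ W, W = m * M + w0 := ⟨_, rfl⟩
  have hqW : q * W ≤ 2 * m * n := by
    have e1 : q * W = m * (q * M) + q * w0 := by rw [hW]; ring
    have e2 : m * (q * M) ≤ m * n := Nat.mul_le_mul_left _ hM1
    have e4 : n ≤ m * n := Nat.le_mul_of_pos_left _ hm
    rw [e1, mul_assoc]; linarith
  have hWn : W + W ≤ n := by
    have : 4 * m * W ≤ 2 * m * n := (Nat.mul_le_mul_right _ hq1).trans hqW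
    have h2 : 2 * m * (W + W) ≤ 2 * m * n := by linarith
    exact Nat.le_of_mul_le_mul_left h2 (by omega)
  have hMW : M ≤ W := by rw [hW]; exact (Nat.le_mul_of_pos_left _ hm).trans (Nat.le_add_right _ _)
  have hfac : (0 : ℕ) < k.factorial := Nat.factorial_pos k
  obtain ⟨E, hE⟩ : ∃ E, E = ∑ j ∈ range k, n.choose j := ⟨_, rfl⟩
  have hnE : n * E ≤ k * n ^ k := by
    rw [hE, mul_sum]
    calc ∑ j ∈ range k, n * n.choose j ≤ ∑ j ∈ range k, n ^ k := by
          refine sum_le_sum fun j hj => ?_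
          rw [mem_range] at hj
          calc n * n.choose j ≤ n * n ^ j := Nat.mul_le_mul_left _ (Nat.choose_le_pow n j)
            _ = n ^ (j + 1) := by ring
            _ ≤ n ^ k := Nat.pow_le_pow_right hnpos hj
      _ = k * n ^ k := by simp
  have hE' : E ≤ k * n ^ k := le_trans (Nat.le_mul_of_pos_left _ hnpos) hnE
  have hB : missBound m c n = (2 * c + 2) * n.choose k + 2 ^ (2 * c + 1) * E := by
    rw [missBound, hk, hE]
  refine ⟨?_, ?_, ?_⟩
  · have : m * (M + c + 1) = m * M + m * (c + 1) := by ring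
    omega
  · have h1 : n ≤ 2 * q * (M + 1 - m) := by
      have e2 : m ≤ M + 1 := by
        by_contra h
        push Not at h
        have : q * (M + 1) ≤ q * m := Nat.mul_le_mul_left _ h.le
        rw [mul_add, mul_one] at this
        linarith
      obtain ⟨d, hd⟩ := Nat.exists_eq_add_of_le e2
      have e3 : M + 1 - m = d := by omega
      rw [e3]
      have e4 : q * M + q = q * m + q * d := by rw [← mul_add, ← hd]; ring
      rw [mul_assoc]
      linarith
    have h2 : n ^ m ≤ (2 * q) ^ m * m.factorial * M.choose m := by
      calc n ^ m ≤ (2 * q * (M + 1 - m)) ^ m := Nat.pow_le_pow_left h1 _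
        _ = (2 * q) ^ m * (M + 1 - m) ^ m := mul_pow _ _ _
        _ ≤ (2 * q) ^ m * M.descFactorial m :=
            Nat.mul_le_mul_left _ (Nat.pow_sub_le_descFactorial M m)
        _ = _ := by rw [Nat.descFactorial_eq_factorial_mul_choose, mul_assoc]
    have h3 : missBound m c n ≤ (2 * c + 2 + C1) * n ^ k := by
      rw [hB]
      have := Nat.mul_le_mul_left (2 * c + 2) (Nat.choose_le_pow n k)
      have := Nat.mul_le_mul_left (2 ^ (2 * c + 1)) hE'
      calc _ ≤ (2 * c + 2) * n ^ k + 2 ^ (2 * c + 1) * (k * n ^ k) := by omega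
        _ = _ := by rw [hC1]; ring
    have h4 : (2 * q) ^ m * m.factorial * missBound m c n ≤
        (2 * q) ^ m * m.factorial * M.choose m := by
      refine le_trans ?_ h2
      calc _ ≤ (2 * q) ^ m * m.factorial * ((2 * c + 2 + C1) * n ^ k) := Nat.mul_le_mul_left _ h3
        _ = ((2 * q) ^ m * m.factorial * (2 * c + 2 + C1)) * n ^ k := by ring
        _ ≤ n * n ^ k := Nat.mul_le_mul_right _ (by omega)
        _ = n ^ m := by rw [hmk]; ring
    exact Nat.le_of_mul_le_mul_left h4 (by positivity)
  · rw [hk]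
    obtain ⟨N, hN⟩ : ∃ N, N = n - (2 * c + 2) - m * (M + c + 1) := ⟨_, rfl⟩
    rw [← hN]
    have hmM : m * (M + c + 1) = m * M + m * (c + 1) := by ring
    have h1 : (n - W) ^ k ≤ k.factorial * N.choose k := by
      rw [← Nat.descFactorial_eq_factorial_mul_choose]
      refine le_trans (Nat.pow_le_pow_left ?_ k) (Nat.pow_sub_le_descFactorial N k)
      omega
    have h2 : k.factorial * n.choose k ≤ n ^ k := by
      rw [← Nat.descFactorial_eq_factorial_mul_choose]
      exact Nat.descFactorial_le_pow n k
    -- Bernoulli: at most the fraction `1 / (2 (2c + 3))` of `n ^ k` is lost.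
    have h3 : ((n : ℝ) ^ k) * (1 - 1 / (2 * (2 * c + 3))) ≤ ((n - W : ℕ) : ℝ) ^ k := by
      have hn0 : (0 : ℝ) < n := by exact_mod_cast hnpos
      have hWr : (q : ℝ) * W ≤ 2 * m * n := by exact_mod_cast hqW
      have hWr2 : (W : ℝ) + W ≤ n := by exact_mod_cast hWn
      have hW0 : (0 : ℝ) ≤ W := Nat.cast_nonneg _
      rw [Nat.cast_sub (by omega)]
      have e1 : (n : ℝ) - W = n * (1 + (-(W / n))) := by field_simp; ring
      rw [e1, mul_pow]
      refine mul_le_mul_of_nonneg_left ?_ (by positivity)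
      have e2 : (W : ℝ) / n ≤ 1 := by rw [div_le_one hn0]; linarith
      refine le_trans ?_ (one_add_mul_le_pow (by linarith) k)
      have e3 : (W : ℝ) / n ≤ 2 * m / q := by
        rw [div_le_div_iff₀ hn0 (by exact_mod_cast hqpos)]; linarith
      have hkm : (k : ℝ) ≤ m := by exact_mod_cast (by omega : k ≤ m)
      have hm0 : (0 : ℝ) < m := by exact_mod_cast hm
      have e4 : (k : ℝ) * (W / n) ≤ 1 / (2 * (2 * c + 3)) := by
        calc (k : ℝ) * (W / n) ≤ m * (2 * m / q) :=
              mul_le_mul hkm e3 (by positivity) hm0.le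
          _ = 1 / (2 * (2 * c + 3)) := by
              rw [hq]; push_cast; field_simp; ring
      linarith
    have h4 : (2 : ℝ) * (k.factorial * (2 ^ (2 * c + 1) * E)) ≤ n ^ k := by
      have e1 : n * (2 * (k.factorial * (2 ^ (2 * c + 1) * E))) ≤ n * n ^ k := by
        calc _ = 2 * (k.factorial * 2 ^ (2 * c + 1)) * (n * E) := by ring
          _ ≤ 2 * (k.factorial * 2 ^ (2 * c + 1)) * (k * n ^ k) := Nat.mul_le_mul_left _ hnE
          _ = (2 * (k.factorial * C1)) * n ^ k := by rw [hC1]; ring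
          _ ≤ n * n ^ k := Nat.mul_le_mul_right _ (by omega)
      exact_mod_cast Nat.le_of_mul_le_mul_left e1 hnpos
    have h5 : (k.factorial : ℝ) * missBound m c n ≤ k.factorial * ((2 * c + 3) * N.choose k) := by
      rw [hB]
      push_cast
      have h1' : ((n - W : ℕ) : ℝ) ^ k ≤ k.factorial * N.choose k := by exact_mod_cast h1
      have h2' : (k.factorial : ℝ) * n.choose k ≤ n ^ k := by exact_mod_cast h2
      have hc0 : (0 : ℝ) ≤ c := Nat.cast_nonneg _
      have e1 : (2 * (c : ℝ) + 3) * ((n : ℝ) ^ k * (1 - 1 / (2 * (2 * c + 3)))) =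
          (2 * c + 2) * n ^ k + n ^ k / 2 := by field_simp; ring
      have e2 := mul_le_mul_of_nonneg_left (h3.trans h1') (by positivity : (0 : ℝ) ≤ 2 * c + 3)
      have e3 := mul_le_mul_of_nonneg_left h2' (by positivity : (0 : ℝ) ≤ 2 * c + 2)
      rw [e1] at e2
      linarith
    have h6 : k.factorial * missBound m c n ≤ k.factorial * ((2 * c + 3) * N.choose k) := by
      exact_mod_cast h5
    exact Nat.le_of_mul_le_mul_left h6 hfac

/-! ### Heavy sets -/

/-- `B` is heavy if the top `m - 1` elements of `[L]` do not complete it to a member of `F`. For shifted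
`F` and `B` above `L`, no `m - 1` elements between `L` and the least element of `B` complete it then. -/
def Heavy (F : Finset (Finset ℕ)) (m L : ℕ) (B : Finset ℕ) : Prop :=
  Ioc (L - (m - 1)) L ∪ B ∉ F

/-- If an `m`-set below the top `M` elements were missing from a shifted family, all `m`-subsets of the
top `M` elements would be missing too. -/
lemma low_sets {F : Finset (Finset ℕ)} {n M m : ℕ} (hF : StepShifted F) (hM : M ≤ n)
    (hG : ((ground n).powerset \ F).card < M.choose m) :
    ∀ A ⊆ ground (n - M), A.card = m → A ∈ F := by
  intro A hA hAc
  by_contra hAF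
  refine hG.not_ge ?_
  have h1 : (powersetCard m (Ioc (n - M) n)).card = M.choose m := by
    rw [card_powersetCard, Nat.card_Ioc]; congr 1; omega
  rw [← h1]
  refine card_le_card fun A₁ hA₁ => ?_
  rw [mem_powersetCard] at hA₁
  rw [mem_sdiff, mem_powerset]
  refine ⟨fun x hx => ?_, fun h => hAF ?_⟩
  · have := hA₁.1 hx
    simp only [ground, mem_Icc, mem_Ioc] at this ⊢; omega
  · have := exchange hF (A' := A) (B := ∅) (disjoint_empty_right _)
      (fun x hx => by have := hA hx; simp only [ground, mem_Icc] at this; omega)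
      A₁ (by omega) (disjoint_empty_right _) (fun x hx y hy => by
        have h1 := hA (mem_sdiff.1 hx).1
        have h2 := hA₁.1 (mem_sdiff.1 hy).1
        simp only [ground, mem_Icc, mem_Ioc] at h1 h2; omega) (by simpa using h)
    simpa using this

/-- Each heavy set is responsible for a whole binomial coefficient of sets missing from `F`. -/
lemma heavy_count {F : Finset (Finset ℕ)} {n m L K : ℕ} (hF : StepShifted F) (hmL : m - 1 ≤ L)
    (𝓢 : Finset (Finset ℕ))
    (h𝓢 : ∀ B ∈ 𝓢, B ⊆ Ioc (n - K) n ∧ Heavy F m L B) (hLn : L ≤ n - K) :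
    𝓢.card * (n - K - L).choose (m - 1) ≤ ((ground n).powerset \ F).card := by
  have h1 : 𝓢.card * (n - K - L).choose (m - 1) =
      (𝓢 ×ˢ powersetCard (m - 1) (Ioc L (n - K))).card := by
    rw [card_product, card_powersetCard, Nat.card_Ioc]
  rw [h1]
  refine card_le_card_of_injOn (fun x => x.2 ∪ x.1) ?_ ?_
  · rintro ⟨B, A⟩ hx
    have hx := mem_coe.1 hx
    rw [mem_product, mem_powersetCard] at hx
    obtain ⟨hB, hA, hAc⟩ := hx
    obtain ⟨hB1, hB2⟩ := h𝓢 B hB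
    simp only at hB hA hAc hB1 hB2
    rw [mem_coe, mem_sdiff, mem_powerset]
    refine ⟨fun x hx => ?_, fun h => hB2 ?_⟩
    · rcases mem_union.1 hx with hx | hx
      · have := hA hx; simp only [ground, mem_Icc, mem_Ioc] at this ⊢; omega
      · have := hB1 hx; simp only [ground, mem_Icc, mem_Ioc] at this ⊢; omega
    · refine exchange hF ?_ ?_ A ?_ ?_ ?_ h
      · rw [disjoint_left]; intro x hx hx'
        have := hB1 hx'; simp only [mem_Ioc] at hx this; omega
      · intro x hx; simp only [mem_Ioc] at hx; omega
      · rw [Nat.card_Ioc]; omega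
      · rw [disjoint_left]; intro x hx hx'
        have h1 := hB1 hx'; have h2 := hA hx; simp only [mem_Ioc] at h1 h2; omega
      · intro x hx y hy
        have h2 := hA (mem_sdiff.1 hy).1
        have h3 := (mem_sdiff.1 hx).1
        simp only [mem_Ioc] at h2 h3; omega
  · rintro ⟨B, A⟩ hx ⟨B', A'⟩ hx' h
    have hx := mem_coe.1 hx
    have hx' := mem_coe.1 hx'
    rw [mem_product, mem_powersetCard] at hx hx'
    have hB := (h𝓢 B hx.1).1
    have hB' := (h𝓢 B' hx'.1).1
    have hA := hx.2.1
    have hA' := hx'.2.1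
    simp only at h hA hA'
    have key : ∀ z, (z ∈ A ∨ z ∈ B) ↔ (z ∈ A' ∨ z ∈ B') := fun z => by
      have := congrArg (z ∈ ·) h
      simpa using this
    have k1 : ∀ z ∈ B, n - K < z := fun z hz => (mem_Ioc.1 (hB hz)).1
    have k2 : ∀ z ∈ B', n - K < z := fun z hz => (mem_Ioc.1 (hB' hz)).1
    have k3 : ∀ z ∈ A, z ≤ n - K := fun z hz => (mem_Ioc.1 (hA hz)).2
    have k4 : ∀ z ∈ A', z ≤ n - K := fun z hz => (mem_Ioc.1 (hA' hz)).2
    rw [Prod.mk.injEq]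
    constructor
    · ext z; constructor
      · intro hz
        rcases (key z).1 (Or.inr hz) with h | h
        · have := k1 z hz; have := k4 z h; omega
        · exact h
      · intro hz
        rcases (key z).2 (Or.inr hz) with h | h
        · have := k2 z hz; have := k3 z h; omega
        · exact h
    · ext z; constructor
      · intro hz
        rcases (key z).1 (Or.inl hz) with h | h
        · exact h
        · have := k3 z hz; have := k2 z h; omega
      · intro hz
        rcases (key z).2 (Or.inl hz) with h | h
        · exact h
        · have := k4 z hz; have := k1 z h; omega

/-- Any `m - 1` elements of `[L]` complete a set above `L` that is not heavy. -/
lemma light {F : Finset (Finset ℕ)} {m L : ℕ} (hF : StepShifted F) (hmL : m - 1 ≤ L)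
    {B : Finset ℕ} (hB : ¬ Heavy F m L B) (hBL : ∀ x ∈ B, L < x) :
    ∀ A ⊆ ground L, A.card = m - 1 → A ∪ B ∈ F := by
  intro A hA hAc
  rw [Heavy, not_not] at hB
  refine exchange hF ?_ ?_ _ ?_ ?_ ?_ hB
  · rw [disjoint_left]; intro x hx hx'
    have h1 := hA hx; have h2 := hBL x hx'; simp only [ground, mem_Icc] at h1; omega
  · intro x hx; have h1 := hA hx; simp only [ground, mem_Icc] at h1; omega
  · rw [Nat.card_Ioc]; omega
  · rw [disjoint_left]; intro x hx hx'
    have h2 := hBL x hx'; simp only [mem_Ioc] at hx; omega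
  · intro x hx y hy
    rw [mem_sdiff] at hx hy
    have h1 := hA hx.1
    simp only [ground, mem_Icc, mem_Ioc] at hx hy h1; omega

/-- Raising an element of a heavy set leaves it heavy. -/
lemma heavy_step {F : Finset (Finset ℕ)} {m L : ℕ} (hF : StepShifted F) {B : Finset ℕ} {x x' : ℕ}
    (hL : L < x) (hxx : x ≤ x') (hx : x ∉ B) (hx' : x' ∉ B) (h : Heavy F m L (insert x B)) :
    Heavy F m L (insert x' B) := by
  intro h'
  apply h
  have e : ∀ z, Ioc (L - (m - 1)) L ∪ insert z B = {z} ∪ (Ioc (L - (m - 1)) L ∪ B) := by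
    intro z; ext w; simp only [mem_union, mem_insert, mem_singleton]; tauto
  rw [e] at h' ⊢
  refine exchange hF ?_ ?_ _ (by simp) ?_ ?_ h'
  · simp [hx]; omega
  · simp; omega
  · simp [hx']; omega
  · intro y hy z hz
    simp only [mem_sdiff, mem_singleton] at hy hz; omega

lemma heavy_single {F : Finset (Finset ℕ)} {m L : ℕ} (hF : StepShifted F) {x x' : ℕ}
    (hL : L < x) (hxx : x ≤ x') (h : Heavy F m L {x}) : Heavy F m L {x'} := by
  have := heavy_step hF (B := ∅) hL hxx (by simp) (by simp) (by simpa using h)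
  simpa using this

lemma heavy_pair {F : Finset (Finset ℕ)} {m L : ℕ} (hF : StepShifted F) {a b a' b' : ℕ}
    (hL : L < a) (hab : a < b) (hab' : a' < b') (ha : a ≤ a') (hb : b ≤ b')
    (h : Heavy F m L {a, b}) : Heavy F m L {a', b'} := by
  refine heavy_step hF hL ha (by simp; omega) (by simp; omega) ?_
  rw [pair_comm]
  rw [pair_comm] at h
  exact heavy_step hF (hL.trans hab) hb (by simp; omega) (by simp; omega) h

lemma heavy_mono {F : Finset (Finset ℕ)} {m L n : ℕ} (hF : UpClosed n F) (hLn : L ≤ n)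
    {B B' : Finset ℕ} (hB : B ⊆ ground n) (hBB : B' ⊆ B) (h : Heavy F m L B) : Heavy F m L B' := by
  intro h'
  refine h (hF _ h' _ (union_subset ?_ hB) (union_subset_union_right hBB))
  intro x hx
  simp only [ground, mem_Icc, mem_Ioc] at hx ⊢; omega

lemma exists_pairs (q : ℕ) (E : Finset ℕ) (hE : 2 * q ≤ E.card) :
    ∃ 𝓑 : Finset (Finset ℕ), 𝓑.card = q ∧ (𝓑 : Set (Finset ℕ)).PairwiseDisjoint id ∧
      ∀ B ∈ 𝓑, B.card = 2 ∧ B ⊆ E := by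
  induction q generalizing E with
  | zero => exact ⟨∅, by simp⟩
  | succ q ih =>
    obtain ⟨B, hB, hBc⟩ := exists_subset_card_eq (show 2 ≤ E.card by omega)
    obtain ⟨𝓑, h1, h2, h3⟩ := ih (E \ B) (by rw [card_sdiff_of_subset hB]; omega)
    have hd : ∀ B' ∈ 𝓑, Disjoint B B' := fun B' hB' =>
      disjoint_of_subset_right (h3 B' hB').2 disjoint_sdiff
    have hn : B ∉ 𝓑 := fun h => by
      have := hd B h
      rw [disjoint_self_iff_empty] at this
      simp [this] at hBc
    refine ⟨insert B 𝓑, by rw [card_insert_of_notMem hn, h1], ?_, ?_⟩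
    · rw [coe_insert]
      exact h2.insert fun B' hB' _ => hd B' hB'
    · intro B' hB'
      rcases mem_insert.1 hB' with rfl | hB'
      · exact ⟨hBc, hB⟩
      · exact ⟨(h3 B' hB').1, (h3 B' hB').2.trans sdiff_subset⟩

/-- The properties of a shifted family missing few subsets of `[n]` that the argument uses. Here `[L]`
serves as a reservoir for completing heavy elements, all `m`-subsets of `[r]` are members, and only
the last `2c + 2` elements of `[n]` are inspected closely. -/
structure NearFull (m c L r n : ℕ) (F : Finset (Finset ℕ)) : Prop where
  hm : 1 ≤ m
  empty : ∅ ∉ F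
  up : UpClosed n F
  step : StepShifted F
  low : ∀ A ⊆ ground r, A.card = m → A ∈ F
  hLr : L ≤ r
  hLn : L + (2 * c + 2) ≤ n
  hL : m * (n - r + c + 1) ≤ L
  few : ∀ 𝓢 : Finset (Finset ℕ), (∀ B ∈ 𝓢, B ⊆ Ioc (n - (2 * c + 2)) n ∧ Heavy F m L B) →
    𝓢.card ≤ 2 * c + 2

namespace NearFull

variable {m c L r n : ℕ} {F : Finset (Finset ℕ)}

lemma hmL (h : NearFull m c L r n F) : m - 1 ≤ L := by
  have := h.hL
  have := Nat.le_mul_of_pos_right m (show 0 < n - r + c + 1 by omega)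
  omega

/-- The bound on the number of heavy sets, counting the empty set, the singletons `{x}` with
`x ∈ I`, and the pairs in `T`. -/
lemma window (h : NearFull m c L r n F) (I : Finset ℕ) (T : Finset (Finset ℕ)) (hI : I.Nonempty)
    (hIs : I ⊆ Ioc (n - (2 * c + 2)) n) (hIh : ∀ x ∈ I, Heavy F m L {x})
    (hT : ∀ B ∈ T, B.card = 2 ∧ B ⊆ Ioc (n - (2 * c + 2)) n ∧ Heavy F m L B) :
    I.card + 1 + T.card ≤ 2 * c + 2 := by
  have hLn := h.hLn
  have h0 : Heavy F m L ∅ := by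
    obtain ⟨x, hx⟩ := hI
    refine heavy_mono h.up (by omega) (fun y hy => ?_) (empty_subset _) (hIh x hx)
    have := hIs hx
    rw [mem_singleton] at hy
    simp only [ground, mem_Icc, mem_Ioc] at this ⊢; omega
  have e1 : (I.image fun x => ({x} : Finset ℕ)).card = I.card :=
    card_image_of_injective _ singleton_injective
  have e2 : ∅ ∉ I.image fun x => ({x} : Finset ℕ) := by simp
  have e3 : Disjoint (insert ∅ (I.image fun x => ({x} : Finset ℕ))) T := by
    rw [disjoint_left]
    intro B hB hBT
    have := (hT B hBT).1
    rcases mem_insert.1 hB with rfl | hB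
    · simp at this
    · obtain ⟨x, -, rfl⟩ := mem_image.1 hB
      simp at this
  have := h.few (insert ∅ (I.image fun x => ({x} : Finset ℕ)) ∪ T) ?_
  · rw [card_union_of_disjoint e3, card_insert_of_notMem e2, e1] at this
    exact this
  · intro B hB
    rcases mem_union.1 hB with hB | hB
    · rcases mem_insert.1 hB with rfl | hB
      · exact ⟨empty_subset _, h0⟩
      · obtain ⟨x, hx, rfl⟩ := mem_image.1 hB
        exact ⟨by simpa using hIs hx, hIh x hx⟩
    · exact (hT B hB).2

/-- Otherwise `∅` and all singletons in the last `2c + 2` elements would be heavy. -/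
lemma not_heavy_first (h : NearFull m c L r n F) : ¬ Heavy F m L {n - 2 * c - 1} := by
  intro hh
  have hLn := h.hLn
  have := h.window (Ioc (n - (2 * c + 2)) n) ∅ ⟨n, by simp; omega⟩ subset_rfl (fun x hx => by
    rw [mem_Ioc] at hx
    exact heavy_single h.step (by omega) (by omega) hh) (by simp)
  rw [Nat.card_Ioc] at this
  simp at this
  omega

/-- If `{n - 2c}` is heavy, then `∅` and the last `2c + 1` singletons exhaust the allowed number of heavy
sets. -/
lemma not_heavy_pairs (h : NearFull m c L r n F) (hh : Heavy F m L {n - 2 * c}) {B : Finset ℕ}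
    (hB : B ⊆ Ioc (n - 2 * c - 1) n) (hBc : B.card = 2) : ¬ Heavy F m L B := by
  intro hBh
  have hLn := h.hLn
  have hsub : Ioc (n - 2 * c - 1) n ⊆ Ioc (n - (2 * c + 2)) n := Ioc_subset_Ioc_left (by omega)
  have := h.window (Ioc (n - 2 * c - 1) n) {B} ⟨n, by simp; omega⟩ hsub (fun x hx => by
    rw [mem_Ioc] at hx
    exact heavy_single h.step (by omega) (by omega) hh)
    (fun B' hB' => by
      rw [mem_singleton] at hB'
      subst hB'
      exact ⟨hBc, hB.trans hsub, hBh⟩)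
  rw [Nat.card_Ioc, card_singleton] at this
  omega

/-- Packing the complement of `P` in `[p]` together with light sets above `p`. -/
lemma pack (h : NearFull m c L r n F) {p : ℕ} (hp : ¬ Heavy F m L {p}) (hLp : L < p) (hpn : p ≤ n)
    (k : ℕ) (𝓑 : Finset (Finset ℕ)) (hdis : (𝓑 : Set (Finset ℕ)).PairwiseDisjoint id)
    (hBp : ∀ B ∈ 𝓑, ∀ x ∈ B, p < x) (hBl : ∀ B ∈ 𝓑, ¬ Heavy F m L B) (hBc : 𝓑.card ≤ c)
    (P : Finset ℕ) (hP : (P ∩ ground p).card ≤ m - 1)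
    (hcard : m * k + (m - 1) * 𝓑.card + (P ∩ ground p).card ≤ p) :
    Packs F (k + 𝓑.card) (ground p \ P ∪ 𝓑.biUnion id) := by
  have hLr := h.hLr
  have hgp : ∀ x, (ground x).card = x := fun x => by simp [ground]
  refine packing_with h.empty h.hm h.hLr h.low ?_ k 𝓑 hdis hBp ?_ _ sdiff_subset ?_ ?_
  · intro A hA hAc y hy hyp
    refine light h.step h.hmL (fun hh => hp ?_) (fun x hx => ?_) A hA hAc
    · exact heavy_single h.step (by omega) hyp hh
    · rw [mem_singleton] at hx; omega
  · intro B hB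
    exact light h.step h.hmL (hBl B hB) fun x hx => hLp.trans (hBp B hB x hx)
  · rw [card_sdiff, hgp]; omega
  · have e1 : ((ground p \ P).filter (r < ·)).card ≤ n - r := by
      rw [← Nat.card_Ioc]
      refine card_le_card fun x hx => ?_
      simp only [ground, mem_filter, mem_sdiff, mem_Icc, mem_Ioc] at hx ⊢
      omega
    have e2 : L - (m - 1) ≤ ((ground p \ P) ∩ ground L).card := by
      have : ground L \ (P ∩ ground p) ⊆ (ground p \ P) ∩ ground L := by
        intro x hx
        simp only [ground, mem_inter, mem_sdiff, mem_Icc, not_and] at hx ⊢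
        exact ⟨⟨by omega, fun hxP => by have := hx.2 hxP; omega⟩, hx.1⟩
      have := card_le_card this
      have h4 := le_card_sdiff (P ∩ ground p) (ground L)
      rw [hgp] at h4
      omega
    refine le_trans ?_ e2
    have h5 := h.hL
    have h6 : (m - 1) * (((ground p \ P).filter (r < ·)).card + 𝓑.card) ≤ (m - 1) * (n - r + c) :=
      Nat.mul_le_mul_left _ (by omega)
    obtain ⟨k, hk⟩ : ∃ k, m = k + 1 := ⟨m - 1, by have := h.hm; omega⟩
    have hk' : m - 1 = k := by omega
    rw [hk'] at h6 ⊢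
    rw [hk] at h5
    have h7 : (k + 1) * (n - r + c + 1) = k * (n - r + c) + k + (n - r + c + 1) := by ring
    omega

end NearFull

/-! ### The case analysis on `{n - 2c}` -/

namespace NearFull

variable {m c L r s : ℕ} {F : Finset (Finset ℕ)}

/-- If all pairs in the top `2c + 1` elements are light, a member of `F` outside `Q` would extend to an
`s`-matching: its complement splits into `m`-sets and light pairs with `m - 1` small elements. -/
lemma Qmiss_subset (h : NearFull m c L r (m * s + c) F) (hs : c + 1 ≤ s)
    (hM : ¬ HasMatching F s) (hpair : ∀ B ⊆ Ioc (m * s + c - 2 * c - 1) (m * s + c),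
      B.card = 2 → ¬ Heavy F m L B) : Qmiss m s c ⊆ (ground (m * s + c)).powerset \ F := by
  intro P hP
  rw [Qmiss, mem_filter] at hP
  rw [mem_sdiff]
  refine ⟨hP.1, fun hPF => hM ?_⟩
  have hLn := h.hLn
  have hm := h.hm
  have hms : s ≤ m * s := Nat.le_mul_of_pos_left s hm
  obtain ⟨p, hp⟩ : ∃ p, p = m * s + c - 2 * c - 1 := ⟨_, rfl⟩
  have hp' : m * s - c - 1 = p := by omega
  have hPc := hP.2
  have hPs := card_split (n' := p) (mem_powerset.1 hP.1)
  rw [hp'] at hPc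
  rw [← hp] at hpair
  have hDc : (Ioc p (m * s + c)).card = 2 * c + 1 := by rw [Nat.card_Ioc]; omega
  have hb : (P ∩ Ioc p (m * s + c)).card ≤ 2 * c + 1 := hDc ▸ card_le_card inter_subset_right
  -- `q` pairs avoiding `P` in the top `2c + 1` elements are what is needed to cover enough of `[n]`.
  obtain ⟨q, hq⟩ : ∃ q, q = c - (P ∩ Ioc p (m * s + c)).card / 2 := ⟨_, rfl⟩
  obtain ⟨𝓑, h1, h2, h3⟩ := exists_pairs q (Ioc p (m * s + c) \ P) (by
    rw [card_sdiff, hDc]; omega)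
  obtain ⟨k, hk⟩ : ∃ k, k + q + 1 = s := ⟨s - 1 - q, by omega⟩
  have hmk : m * k + (m - 1) * q + q + m = m * s := by
    obtain ⟨j, rfl⟩ : ∃ j, m = j + 1 := ⟨m - 1, by omega⟩
    rw [← hk, Nat.add_sub_cancel]; ring
  have hBsub : ∀ B ∈ 𝓑, B ⊆ Ioc p (m * s + c) := fun B hB => (h3 B hB).2.trans sdiff_subset
  have hpk := h.pack (p := p) (by rw [hp]; exact h.not_heavy_first) (by omega) (by omega) k 𝓑 h2
    (fun B hB x hx => (mem_Ioc.1 (hBsub B hB hx)).1)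
    (fun B hB => hpair B (hBsub B hB) (h3 B hB).1) (by omega) P (by omega) (by rw [h1]; omega)
  have := hpk.insert h.empty hPF (by
    rw [disjoint_union_right, disjoint_biUnion_right]
    exact ⟨disjoint_sdiff, fun B hB => disjoint_of_subset_right (h3 B hB).2 disjoint_sdiff⟩)
  rw [h1, hk] at this
  exact this.hasMatching

/-- For `c = 1` and `{n - 2}` light, `F` is contained in `W`, which is no larger than `Q`. -/
lemma card_Qmiss_le_of_one (h : NearFull m 1 L r (m * s + 1) F) (hs : 2 ≤ s)
    (hM : ¬ HasMatching F s) (hl : ¬ Heavy F m L {m * s + 1 - 2}) :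
    (Qmiss m s 1).card ≤ ((ground (m * s + 1)).powerset \ F).card := by
  have hLn := h.hLn
  have hm := h.hm
  have hms : s ≤ m * s := Nat.le_mul_of_pos_left s hm
  obtain ⟨p, hp⟩ : ∃ p, m * s + 1 = p + 3 := ⟨m * s + 1 - 3, by omega⟩
  have hW : (ground (m * s + 1)).powerset.filter
      (fun P => (P ∩ ground (p + 1)).card ≤ m - 1) ⊆ (ground (m * s + 1)).powerset \ F := by
    intro P hP
    rw [mem_filter] at hP
    rw [mem_sdiff]
    refine ⟨hP.1, fun hPF => hM ?_⟩
    have hmk : m * (s - 1) + m = m * s := by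
      rw [← Nat.mul_succ]; congr 1; omega
    have e : m * s + 1 - 2 = p + 1 := by omega
    rw [e] at hl
    have hpk := h.pack hl (by omega) (by omega) (s - 1) ∅ (by simp) (by simp) (by simp)
      (by simp) P hP.2 (by rw [card_empty]; omega)
    have := hpk.insert h.empty hPF (by simpa using disjoint_sdiff)
    rw [card_empty, add_zero, Nat.sub_add_cancel (by omega)] at this
    exact this.hasMatching
  refine le_trans ?_ (card_le_card hW)
  -- The sets missing from `Q` but not from `W` are `A ∪ {n - 2}` with `A` an `(m - 1)`-subset of
  -- `[n - 3]`; they are sent to `A ∪ {n - 1, n}`, which is missing from `W` but not from `Q`.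
  have key : ∀ P ∈ Qmiss m s 1, P ⊆ ground (p + 3) ∧ P.card + (P ∩ ground p).card < 2 * m := by
    intro P hP
    rw [Qmiss, mem_filter, mem_powerset] at hP
    have e : m * s - 1 - 1 = p := by omega
    rw [e, hp] at hP
    exact ⟨hP.1, by omega⟩
  have key1 : ∀ P ⊆ ground (p + 3), p + 1 ∈ P → (P ∩ ground p).card = m - 1 →
      P.card + (P ∩ ground p).card < 2 * m → P = insert (p + 1) (P ∩ ground p) := by
    intro P hP h1 h2 h3
    have h4 := card_split (n' := p) hP
    have h5 : (P ∩ Ioc p (p + 3)).card ≤ 1 := by omega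
    ext z
    constructor
    · intro hz
      rw [mem_insert, mem_inter]
      by_cases hzp : z ≤ p
      · have := hP hz
        simp only [ground, mem_Icc] at this ⊢
        exact Or.inr ⟨hz, this.1, hzp⟩
      · left
        have := hP hz
        simp only [ground, mem_Icc] at this
        refine card_le_one.1 h5 z ?_ (p + 1) ?_
        · rw [mem_inter, mem_Ioc]; exact ⟨hz, by omega⟩
        · rw [mem_inter, mem_Ioc]; exact ⟨h1, by omega⟩
    · intro hz
      rcases mem_insert.1 hz with rfl | hz
      · exact h1
      · exact (mem_inter.1 hz).1
  have hg1 : ∀ P : Finset ℕ, (P ∩ ground (p + 1)).card ≤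
      (P ∩ ground p).card + if p + 1 ∈ P then 1 else 0 := by
    intro P
    have : ground (p + 1) = insert (p + 1) (ground p) := by
      ext z; simp only [ground, mem_insert, mem_Icc]; omega
    rw [this]
    split_ifs with h1
    · rw [inter_insert_of_mem h1]; exact card_insert_le _ _
    · rw [inter_insert_of_notMem h1]; omega
  have himg : ∀ P : Finset ℕ, insert (p + 3) (insert (p + 2) (P ∩ ground p)) ∩ ground (p + 1) =
      P ∩ ground p := by
    intro P; ext z; simp only [ground, mem_inter, mem_insert, mem_Icc]
    constructor
    · rintro ⟨rfl | rfl | h, h'⟩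
      · omega
      · omega
      · exact h
    · rintro h; exact ⟨Or.inr (Or.inr h), by omega⟩
  have himg' : ∀ P : Finset ℕ, insert (p + 3) (insert (p + 2) (P ∩ ground p)) ∩ ground p =
      P ∩ ground p := by
    intro P; ext z; simp only [ground, mem_inter, mem_insert, mem_Icc]
    constructor
    · rintro ⟨rfl | rfl | h, h'⟩
      · omega
      · omega
      · exact h
    · rintro h; exact ⟨Or.inr (Or.inr h), by omega⟩
  have hcimg : ∀ P : Finset ℕ, (insert (p + 3) (insert (p + 2) (P ∩ ground p))).card =
      (P ∩ ground p).card + 2 := by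
    intro P
    rw [card_insert_of_notMem, card_insert_of_notMem]
    · simp [ground]
    · simp [ground]
  refine card_le_card_of_injOn (fun P => if p + 1 ∈ P ∧ (P ∩ ground p).card = m - 1 then
    insert (p + 3) (insert (p + 2) (P ∩ ground p)) else P) ?_ ?_
  · intro P hP
    obtain ⟨h1, h2⟩ := key P hP
    rw [mem_coe, mem_filter, mem_powerset, hp]
    simp only
    split_ifs with h3
    · rw [himg]
      refine ⟨?_, h3.2.le⟩
      intro z; simp only [ground, mem_inter, mem_insert, mem_Icc]; omega
    · refine ⟨h1, ?_⟩
      have h4 := hg1 P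
      have h5 := card_le_card (inter_subset_left : P ∩ ground p ⊆ P)
      split_ifs at h4 with h6
      · have h7 : (P ∩ ground p).card ≠ m - 1 := fun h7 => h3 ⟨h6, h7⟩
        omega
      · omega
  · intro P hP P' hP' he
    obtain ⟨h1, h2⟩ := key P hP
    obtain ⟨h1', h2'⟩ := key P' hP'
    simp only at he
    split_ifs at he with h3 h4 h4
    · have := congrArg (· ∩ ground p) he
      simp only [himg'] at this
      rw [key1 P h1 h3.1 h3.2 h2, key1 P' h1' h4.1 h4.2 h2', this]
    · rw [← he, hcimg, himg'] at h2'
      omega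
    · rw [he, hcimg, himg'] at h2
      omega
    · exact he

/-- For `c ≥ 2` and `{n - 2c}` light, one of the nested pairs `{n - 2c + i, n + 1 - i}` is heavy, as
otherwise they extend to an `s`-matching; but then there are too many heavy sets. -/
lemma heavy_of_two_le (h : NearFull m c L r (m * s + c) F) (hc : 2 ≤ c) (hs : c ≤ s)
    (hM : ¬ HasMatching F s) : Heavy F m L {m * s + c - 2 * c} := by
  by_contra hl
  have hLn := h.hLn
  have hm := h.hm
  have hms : s ≤ m * s := Nat.le_mul_of_pos_left s hm
  obtain ⟨p, hp⟩ : ∃ p, m * s + c = p + 2 * c := ⟨m * s + c - 2 * c, by omega⟩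
  have hex : ∃ i ∈ Icc 1 c, Heavy F m L {p + i, p + 2 * c + 1 - i} := by
    by_contra hno
    push Not at hno
    have hinj : Set.InjOn (fun i => ({p + i, p + 2 * c + 1 - i} : Finset ℕ)) (Icc 1 c : Finset ℕ) := by
      intro i hi j hj hij
      simp only [coe_Icc, Set.mem_Icc] at hi hj
      have : p + i ∈ ({p + j, p + 2 * c + 1 - j} : Finset ℕ) := by
        have : p + i ∈ ({p + i, p + 2 * c + 1 - i} : Finset ℕ) := by simp
        exact (Finset.ext_iff.1 hij _).1 this
      simp only [mem_insert, mem_singleton] at this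
      omega
    have hcard : ((Icc 1 c).image fun i => ({p + i, p + 2 * c + 1 - i} : Finset ℕ)).card = c := by
      rw [card_image_of_injOn hinj]; simp
    have e : m * s + c - 2 * c = p := by omega
    rw [e] at hl
    have hmk : m * (s - c) + (m - 1) * c + c = m * s := by
      obtain ⟨j, rfl⟩ : ∃ j, m = j + 1 := ⟨m - 1, by omega⟩
      obtain ⟨t, rfl⟩ : ∃ t, s = t + c := ⟨s - c, by omega⟩
      rw [Nat.add_sub_cancel, Nat.add_sub_cancel]; ring
    have := h.pack hl (by omega) (by omega) (s - c)
      ((Icc 1 c).image fun i => ({p + i, p + 2 * c + 1 - i} : Finset ℕ)) ?_ ?_ ?_ hcard.le ∅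
      (by simp) (by rw [hcard, empty_inter, card_empty]; omega)
    · rw [hcard, Nat.sub_add_cancel hs] at this
      exact hM this.hasMatching
    · intro B hB B' hB' hne
      simp only [coe_image, Set.mem_image, coe_Icc, Set.mem_Icc] at hB hB'
      obtain ⟨i, hi, rfl⟩ := hB
      obtain ⟨j, hj, rfl⟩ := hB'
      have hij : i ≠ j := fun h => hne (by rw [h])
      change Disjoint _ _
      rw [disjoint_left]
      intro x hx hx'
      simp only [id, mem_insert, mem_singleton] at hx hx'
      omega
    · intro B hB x hx
      obtain ⟨i, hi, rfl⟩ := mem_image.1 hB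
      simp only [mem_insert, mem_singleton, mem_Icc] at hx hi
      omega
    · intro B hB
      obtain ⟨i, hi, rfl⟩ := mem_image.1 hB
      exact hno i hi
  obtain ⟨i, hi, hh⟩ := hex
  rw [mem_Icc] at hi
  obtain ⟨n, hn⟩ : ∃ n, n = p + 2 * c := ⟨_, rfl⟩
  rw [← hn] at hp hh
  rw [hp] at h hLn
  -- The heavy singletons and pairs `{a, n}` in the window `[x, n]`.
  have hsingle : ∀ x, x < n → p < x → Heavy F m L {x, n} → ∀ y ∈ Icc x n, Heavy F m L {y} := by
    intro x hxn hpx hx y hy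
    rw [mem_Icc] at hy
    refine heavy_single h.step (x := x) (by omega) hy.1 ?_
    refine heavy_mono h.up (by omega) (fun z hz => ?_) (by simp) hx
    simp only [mem_insert, mem_singleton] at hz
    simp only [ground, mem_Icc]; omega
  have hpairs : ∀ x, x < n → p < x → Heavy F m L {x, n} →
      ∀ B ∈ (Ico x n).image (fun a => ({a, n} : Finset ℕ)),
        B.card = 2 ∧ B ⊆ Ioc (n - (2 * c + 2)) n ∧ Heavy F m L B := by
    intro x hxn hpx hx B hB
    obtain ⟨a, ha, rfl⟩ := mem_image.1 hB
    rw [mem_Ico] at ha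
    refine ⟨card_pair (by omega), fun z hz => ?_,
      heavy_pair h.step (by omega) (by omega) (by omega) ha.1 le_rfl hx⟩
    simp only [mem_insert, mem_singleton] at hz
    rw [mem_Ioc]; omega
  have hcp : ∀ x, ((Ico x n).image (fun a => ({a, n} : Finset ℕ))).card = n - x := by
    intro x
    rw [card_image_of_injOn, Nat.card_Ico]
    intro a ha b hb hab
    simp only [coe_Ico, Set.mem_Ico] at ha hb
    have : a ∈ ({b, n} : Finset ℕ) := by
      have : a ∈ ({a, n} : Finset ℕ) := by simp
      exact (Finset.ext_iff.1 hab _).1 this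
    simp only [mem_insert, mem_singleton] at this
    omega
  have hIcc : ∀ x, p < x → Icc x n ⊆ Ioc (n - (2 * c + 2)) n := by
    intro x hx z hz
    simp only [mem_Icc, mem_Ioc] at hz ⊢; omega
  -- For `i < c` the window `[n - c - 1, n]` already holds too many heavy sets; for `i = c` the window
  -- `[n - c, n]` does, with the help of the pair `{n - 2, n - 1}`.
  rcases lt_or_eq_of_le hi.2 with hic | rfl
  · have hx : Heavy F m L {n - c - 1, n} :=
      heavy_pair h.step (by omega) (by omega) (by omega) (by omega) (by omega) hh
    have := h.window (Icc (n - c - 1) n) _ ⟨n, by simp; omega⟩ (hIcc _ (by omega))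
      (hsingle _ (by omega) (by omega) hx) (hpairs _ (by omega) (by omega) hx)
    rw [hcp, Nat.card_Icc] at this
    omega
  · have hx : Heavy F m L {n - i, n} :=
      heavy_pair h.step (by omega) (by omega) (by omega) (by omega) (by omega) hh
    have hy : Heavy F m L {n - 2, n - 1} :=
      heavy_pair h.step (by omega) (by omega) (by omega) (by omega) (by omega) hh
    have hnot : ({n - 2, n - 1} : Finset ℕ) ∉
        (Ico (n - i) n).image (fun a => ({a, n} : Finset ℕ)) := by
      intro hmem
      obtain ⟨a, -, ha⟩ := mem_image.1 hmem
      have : n ∈ ({n - 2, n - 1} : Finset ℕ) := by rw [← ha]; simp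
      simp only [mem_insert, mem_singleton] at this
      omega
    have := h.window (Icc (n - i) n)
      (insert {n - 2, n - 1} ((Ico (n - i) n).image (fun a => ({a, n} : Finset ℕ))))
      ⟨n, by simp⟩ (hIcc _ (by omega))
      (hsingle _ (by omega) (by omega) hx) (fun B hB => by
        rcases mem_insert.1 hB with rfl | hB
        · refine ⟨card_pair (by omega), fun z hz => ?_, hy⟩
          simp only [mem_insert, mem_singleton] at hz
          rw [mem_Ioc]; omega
        · exact hpairs _ (by omega) (by omega) hx B hB)
    rw [card_insert_of_notMem hnot, hcp, Nat.card_Icc] at this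
    omega

/-- A family with the `NearFull` properties and no `s`-matching misses at least as many sets as `Q`. -/
lemma card_Qmiss_le (h : NearFull m c L r (m * s + c) F) (hc : 1 ≤ c) (hs : c + 1 ≤ s)
    (hM : ¬ HasMatching F s) :
    (Qmiss m s c).card ≤ ((ground (m * s + c)).powerset \ F).card := by
  by_cases hh : Heavy F m L {m * s + c - 2 * c}
  · exact card_le_card (h.Qmiss_subset hs hM fun B hB hBc => h.not_heavy_pairs hh hB hBc)
  · rcases eq_or_lt_of_le hc with rfl | hc
    · exact h.card_Qmiss_le_of_one hs hM hh
    · exact absurd (h.heavy_of_two_le hc (by omega) hM) hh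

end NearFull

/-! ### The family `Q` and the conclusion -/

/-- Each set of `Q` has weight at least `2m` when the elements of `[ms - c - 1]` have weight `2` and the
other elements weight `1`, while the total weight of `[n]` is `2ms - 1`. -/
lemma Qfam_noMatching {m s c : ℕ} (hs : c + 1 ≤ m * s) : ¬ HasMatching (Qfam m s c) s := by
  rintro ⟨M, hM, hMc, hMd⟩
  obtain ⟨p, hp⟩ : ∃ p, p = m * s - c - 1 := ⟨_, rfl⟩
  have h1 : ∀ P ∈ M, P ⊆ ground (m * s + c) ∧ 2 * m ≤ P.card + (P ∩ ground p).card := by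
    intro P hP
    have := hM hP
    rwa [Qfam, mem_filter, mem_powerset, ← hp] at this
  have h2 : s * (2 * m) ≤ ∑ P ∈ M, (P.card + (P ∩ ground p).card) := by
    rw [← hMc, ← smul_eq_mul]
    exact card_nsmul_le_sum _ _ _ fun P hP => (h1 P hP).2
  have h3 : ∑ P ∈ M, P.card ≤ m * s + c := by
    have e : (M.biUnion id).card = ∑ P ∈ M, P.card := card_biUnion hMd
    rw [← e]
    refine (card_le_card (biUnion_subset.2 fun P hP => (h1 P hP).1)).trans ?_
    simp [ground]
  have h4 : ∑ P ∈ M, (P ∩ ground p).card ≤ p := by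
    have e : (M.biUnion fun P => P ∩ ground p).card = ∑ P ∈ M, (P ∩ ground p).card :=
      card_biUnion fun P hP P' hP' hne =>
        disjoint_of_subset_left inter_subset_left
          (disjoint_of_subset_right inter_subset_left (hMd hP hP' hne))
    rw [← e]
    refine (card_le_card (biUnion_subset.2 fun P _ => inter_subset_right)).trans ?_
    simp [ground]
  rw [sum_add_distrib] at h2
  have h5 : s * (2 * m) = 2 * (m * s) := by ring
  omega

theorem stmt_0 (m c : ℕ) (hm : 1 ≤ m) (hc : 1 ≤ c) :
    ∃ s0 : ℕ, ∀ s : ℕ, s0 ≤ s →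
      (∀ F : Finset (Finset ℕ), F ⊆ (ground (m * s + c)).powerset →
        ¬ HasMatching F s → F.card ≤ (Qfam m s c).card) ∧
      ¬ HasMatching (Qfam m s c) s := by
  obtain ⟨n0, hn0⟩ := exists_params m c hm
  refine ⟨n0 + c + 1, fun s hs => ?_⟩
  have hms : s ≤ m * s := Nat.le_mul_of_pos_left s hm
  refine ⟨fun F₀ hF₀ hM₀ => ?_, Qfam_noMatching (by omega)⟩
  obtain ⟨F, hF, h0, hM, hcard, hup, hstep⟩ := exists_shifted (by omega) hF₀ hM₀
  refine hcard.trans ?_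
  obtain ⟨M, hM1, hM2, hM3⟩ := hn0 (m * s + c) (by omega)
  have hU := card_Qmiss_le hm (show c + 1 ≤ m * s by omega)
  have hQ : (Qfam m s c).card + (Qmiss m s c).card = (ground (m * s + c)).powerset.card :=
    card_filter_add_card_filter_not _
  have hG : ((ground (m * s + c)).powerset \ F).card + F.card =
      (ground (m * s + c)).powerset.card := card_sdiff_add_card_eq_card hF
  suffices (Qmiss m s c).card ≤ ((ground (m * s + c)).powerset \ F).card by omega
  by_contra hlt
  push Not at hlt
  obtain ⟨n, hn⟩ : ∃ n, n = m * s + c := ⟨_, rfl⟩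
  obtain ⟨L, hL⟩ : ∃ L, L = m * (M + c + 1) := ⟨_, rfl⟩
  have hnorm : NearFull m c L (n - M) n F := by
    rw [← hn] at hU hlt hup hM1 hM2 hM3
    rw [← hL] at hM1 hM3
    have hmL : m - 1 ≤ L := by
      have := Nat.le_mul_of_pos_right m (show 0 < M + c + 1 by omega)
      omega
    refine ⟨hm, h0, hup, hstep, low_sets hstep (by omega) (by omega), by omega, by omega, ?_, ?_⟩
    · rw [Nat.sub_sub_self (by omega), hL]
    · intro 𝓢 h𝓢
      have h1 := heavy_count hstep hmL 𝓢 h𝓢 (by omega)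
      by_contra h2
      have h3 : (2 * c + 3) * (n - (2 * c + 2) - L).choose (m - 1) ≤
          𝓢.card * (n - (2 * c + 2) - L).choose (m - 1) := Nat.mul_le_mul_right _ (by omega)
      omega
  rw [hn] at hnorm
  exact hlt.not_ge (hnorm.card_Qmiss_le hc (by omega) hM)
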